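/- Let N ≥ 3, α ∈ (0, N), and p ≥ (N+α)/(N−2). Then there is a constant C > 0 such that for every u ∈ D^{1,2}(G): ‖R_α ∗ |u|^p‖_{2N/(N−α)} ≤ C·‖u‖_{D^{1,2}}^p. -/

import Mathlib

open Filter Topology

noncomputable section

namespace Choquard

variable {G : Type*}

/-- The word metric on the Cayley graph of `(G, S)`: the least `k` such that
`y = x * s₁ * ⋯ * s_k` with each `sᵢ ∈ S`. -/
def wordDist [Group G] (S : Finset G) (x y : G) : ℕ :=
  sInf {k : ℕ | ∃ l : List G, (∀ s ∈ l, s ∈ S) ∧ l.length = k ∧ y = x * l.prod}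

/-- Convolution against a kernel: `(R ∗ f)(x) = ∑_{y ∈ G} R(x,y) f(y)`. -/
def conv (R : G → G → ℝ) (f : G → ℝ) (x : G) : ℝ := ∑' y, R x y * f y

/-- The `ℓ^q(G)` norm of `u`. -/
def lpNorm (q : ℝ) (u : G → ℝ) : ℝ := (∑' x, |u x| ^ q) ^ (1 / q)

/-- `u ∈ ℓ^q(G)`. -/
def Memlp (q : ℝ) (u : G → ℝ) : Prop := Summable fun x : G => |u x| ^ q

/-- `|∇u(x)|_p^p = ∑_{y ∼ x} |u(y) − u(x)|^p`, where `y ∼ x` iff `y = x * s`, `s ∈ S`. -/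
def gradP [Group G] (S : Finset G) (p : ℝ) (u : G → ℝ) (x : G) : ℝ :=
  ∑ s ∈ S, |u (x * s) - u x| ^ p

/-- The `D^{1,p}` norm `(∑_x ∑_{y ∼ x} |u(y) − u(x)|^p)^{1/p}`. -/
def D1Norm [Group G] (S : Finset G) (p : ℝ) (u : G → ℝ) : ℝ :=
  (∑' x, gradP S p u x) ^ (1 / p)

/-- `u ∈ D^{1,p}(G) = {u ∈ ℓ^{Np/(N−p)}(G) : ‖u‖_{D^{1,p}} < ∞}`. -/
def MemD1p [Group G] (S : Finset G) (N : ℕ) (p : ℝ) (u : G → ℝ) : Prop :=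
  Memlp ((N : ℝ) * p / ((N : ℝ) - p)) u ∧ Summable (gradP S p u)

/-- `|∇u(x)|₂² = ∑_{y ∼ x} (u(y) − u(x))²`. -/
def gradSq [Group G] (S : Finset G) (u : G → ℝ) (x : G) : ℝ :=
  ∑ s ∈ S, (u (x * s) - u x) ^ 2

/-- The `D^{1,2}` norm. -/
def D12Norm [Group G] (S : Finset G) (u : G → ℝ) : ℝ :=
  (∑' x, gradSq S u x) ^ ((1 : ℝ) / 2)

/-- `u ∈ D^{1,2}(G) = {u ∈ ℓ^{2N/(N−2)}(G) : ‖u‖_{D^{1,2}} < ∞}`. -/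
def MemD12 [Group G] (S : Finset G) (N : ℕ) (u : G → ℝ) : Prop :=
  Memlp (2 * (N : ℝ) / ((N : ℝ) - 2)) u ∧ Summable (gradSq S u)

/-- The graph Laplacian `Δu(x) = ∑_{y ∼ x} (u(y) − u(x))`. -/
def lap [Group G] (S : Finset G) (u : G → ℝ) (x : G) : ℝ :=
  ∑ s ∈ S, (u (x * s) - u x)

/-- `u ∈ D^{2,2}(G) = {u ∈ ℓ^{2N/(N−4)}(G) : ‖Δu‖_{ℓ²} < ∞}`. -/
def MemD22 [Group G] (S : Finset G) (N : ℕ) (u : G → ℝ) : Prop :=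
  Memlp (2 * (N : ℝ) / ((N : ℝ) - 4)) u ∧ Summable fun x => (lap S u x) ^ 2

/-- `u ∈ D^{2,p}(G) = {u ∈ ℓ^{Np/(N−2p)}(G) : ‖Δu‖_{ℓ^p} < ∞}`. -/
def MemD2p [Group G] (S : Finset G) (N : ℕ) (p : ℝ) (u : G → ℝ) : Prop :=
  Memlp ((N : ℝ) * p / ((N : ℝ) - 2 * p)) u ∧ Summable fun x => |lap S u x| ^ p

/-- The nonlocal energy `∑_{x ∈ G} (R_α ∗ |u|^p)(x) |u(x)|^p`. -/
def energy (R : G → G → ℝ) (p : ℝ) (u : G → ℝ) : ℝ :=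
  ∑' x, conv R (fun y => |u y| ^ p) x * |u x| ^ p

/-- The optimal constant `K` of the Sobolev-type inequality. -/
def bestK [Group G] (S : Finset G) (N : ℕ) (R : G → G → ℝ) (p : ℝ) : ℝ :=
  sSup {t : ℝ | ∃ u : G → ℝ, MemD12 S N u ∧ D12Norm S u = 1 ∧ t = energy R p u}

/-- The discrete `p`-Laplacian. -/
def pLap [Group G] (S : Finset G) (p : ℝ) (u : G → ℝ) (x : G) : ℝ :=
  ∑ s ∈ S, |u (x * s) - u x| ^ (p - 2) * (u (x * s) - u x)

/-- The cutoff `Ψ_r`, the indicator of `{x : d(x,e) ≥ r + 1}`. -/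
def cutoff [Group G] (S : Finset G) (r : ℕ) (x : G) : ℝ :=
  if r + 1 ≤ wordDist S 1 x then 1 else 0

open scoped ENNReal

lemma exists_word [Group G] (S : Finset G) (hS_gen : Subgroup.closure (S : Set G) = ⊤)
    (hS_sym : ∀ s ∈ S, s⁻¹ ∈ S) (x y : G) :
    ∃ l : List G, (∀ s ∈ l, s ∈ S) ∧ l.length = wordDist S x y ∧ y = x * l.prod := by
  have hne : {k : ℕ | ∃ l : List G, (∀ s ∈ l, s ∈ S) ∧ l.length = k ∧ y = x * l.prod}.Nonempty := by
    have hm : x⁻¹ * y ∈ (Subgroup.closure (S : Set G)).toSubmonoid := by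
      rw [hS_gen]; exact Subgroup.mem_top _
    rw [Subgroup.closure_toSubmonoid] at hm
    obtain ⟨l, hl, hp⟩ := Submonoid.exists_list_of_mem_closure hm
    refine ⟨l.length, l, ?_, rfl, ?_⟩
    · intro s hs
      rcases hl s hs with h | h
      · exact h
      · have := hS_sym _ h
        simpa using this
    · rw [hp]; group
  exact Nat.sInf_mem hne

lemma wordDist_left [Group G] (S : Finset G) (x y : G) :
    wordDist S x y = wordDist S 1 (x⁻¹ * y) := by
  unfold wordDist
  congr 1
  ext k
  simp only [Set.mem_ofPred_eq, one_mul]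
  refine exists_congr fun l => and_congr Iff.rfl (and_congr Iff.rfl ?_)
  rw [inv_mul_eq_iff_eq_mul]

lemma wordDist_pos [Group G] (S : Finset G) (hS_gen : Subgroup.closure (S : Set G) = ⊤)
    (hS_sym : ∀ s ∈ S, s⁻¹ ∈ S) (x y : G) (h : x ≠ y) : 0 < wordDist S x y := by
  obtain ⟨l, _, hl, hy⟩ := exists_word S hS_gen hS_sym x y
  rcases Nat.eq_zero_or_pos (wordDist S x y) with h0 | h0
  · rw [h0, List.length_eq_zero_iff] at hl
    subst hl
    simp at hy
    exact absurd hy.symm h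
  · exact h0

lemma translate_step [Group G] (S : Finset G) (v : G → ℝ) (s : G) (hs : s ∈ S) :
    ∑' x, ENNReal.ofReal ((v (x * s) - v x) ^ 2) ≤ ∑' x, ENNReal.ofReal (gradSq S v x) := by
  refine ENNReal.tsum_le_tsum fun x => ENNReal.ofReal_le_ofReal ?_
  exact Finset.single_le_sum (f := fun s => (v (x * s) - v x) ^ 2) (fun i _ => sq_nonneg _) hs

lemma translate_list [Group G] (S : Finset G) (v : G → ℝ) (l : List G) (hl : ∀ s ∈ l, s ∈ S) :
    ∑' x, ENNReal.ofReal ((v (x * l.prod) - v x) ^ 2) ≤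
      ENNReal.ofReal ((l.length : ℝ) ^ 2) * ∑' x, ENNReal.ofReal (gradSq S v x) := by
  induction l with
  | nil => simp
  | cons s l ih =>
    have ih := ih (fun t ht => hl t (by simp [ht]))
    have hs := translate_step S v s (hl s (by simp))
    rcases Nat.eq_zero_or_pos l.length with h0 | h0
    · rw [List.length_eq_zero_iff] at h0
      subst h0
      simpa using hs
    have hj : (0 : ℝ) < l.length := by exact_mod_cast h0
    set j : ℝ := (l.length : ℝ) with hjd
    set D := ∑' x, ENNReal.ofReal (gradSq S v x)
    have e1 : ∑' x, ENNReal.ofReal ((v (x * s * l.prod) - v (x * s)) ^ 2) =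
        ∑' x, ENNReal.ofReal ((v (x * l.prod) - v x) ^ 2) :=
      (Equiv.mulRight s).tsum_eq (fun x => ENNReal.ofReal ((v (x * l.prod) - v x) ^ 2))
    calc ∑' x, ENNReal.ofReal ((v (x * (s :: l).prod) - v x) ^ 2)
        ≤ ∑' x, (ENNReal.ofReal (1 + 1 / j) * ENNReal.ofReal ((v (x * s * l.prod) - v (x * s)) ^ 2)
          + ENNReal.ofReal (1 + j) * ENNReal.ofReal ((v (x * s) - v x) ^ 2)) := by
          refine ENNReal.tsum_le_tsum fun x => ?_
          rw [← ENNReal.ofReal_mul (by positivity), ← ENNReal.ofReal_mul (by positivity),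
            ← ENNReal.ofReal_add (by positivity) (by positivity)]
          apply ENNReal.ofReal_le_ofReal
          rw [List.prod_cons, ← mul_assoc]
          generalize v (x * s * l.prod) = a
          generalize v (x * s) = b
          generalize v x = c
          have : (1 + 1 / j) * (a - b) ^ 2 + (1 + j) * (b - c) ^ 2 - (a - c) ^ 2
              = ((a - b) - j * (b - c)) ^ 2 / j := by field_simp; ring
          have h2 : 0 ≤ ((a - b) - j * (b - c)) ^ 2 / j := by positivity
          linarith
      _ = ENNReal.ofReal (1 + 1 / j) * ∑' x, ENNReal.ofReal ((v (x * l.prod) - v x) ^ 2)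
          + ENNReal.ofReal (1 + j) * ∑' x, ENNReal.ofReal ((v (x * s) - v x) ^ 2) := by
          rw [ENNReal.tsum_add, ENNReal.tsum_mul_left, ENNReal.tsum_mul_left, e1]
      _ ≤ ENNReal.ofReal (1 + 1 / j) * (ENNReal.ofReal (j ^ 2) * D)
          + ENNReal.ofReal (1 + j) * D := by gcongr
      _ = ENNReal.ofReal (((s :: l).length : ℝ) ^ 2) * D := by
          rw [← mul_assoc, ← add_mul, ← ENNReal.ofReal_mul (by positivity),
            ← ENNReal.ofReal_add (by positivity) (by positivity)]
          congr 2
          rw [List.length_cons]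
          push_cast
          rw [← hjd]
          field_simp
          ring

/-- truncation -/
def clampf (a b s : ℝ) : ℝ := min (max s a) b

lemma clampf_mono (a b : ℝ) {s t : ℝ} (h : s ≤ t) : clampf a b s ≤ clampf a b t :=
  min_le_min_right _ (max_le_max_right _ h)

lemma clampf_sum (a : ℕ → ℝ) (ha : Monotone a) (s : ℝ) (n : ℕ) :
    ∑ i ∈ Finset.range n, (clampf (a i) (a (i + 1)) s - a i) = clampf (a 0) (a n) s - a 0 := by
  induction n with
  | zero => simp [clampf]
  | succ n ih =>
    rw [Finset.sum_range_succ, ih]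
    have h1 := ha (Nat.zero_le n)
    have h2 := ha (Nat.le_succ n)
    simp only [Nat.succ_eq_add_one] at h2
    unfold clampf
    simp only [min_def, max_def]
    split_ifs <;> linarith

lemma clampf_lip (a b s t : ℝ) (h : s ≤ t) : clampf a b t - clampf a b s ≤ t - s := by
  unfold clampf
  simp only [min_def, max_def]
  split_ifs <;> linarith

lemma clampf_sq_sum_aux (a : ℕ → ℝ) (ha : Monotone a) (s t : ℝ) (hst : s ≤ t) (n : ℕ) :
    ∑ i ∈ Finset.range n, (clampf (a i) (a (i + 1)) t - clampf (a i) (a (i + 1)) s) ^ 2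
      ≤ (t - s) ^ 2 := by
  have h0 : ∀ i ∈ Finset.range n, 0 ≤ clampf (a i) (a (i + 1)) t - clampf (a i) (a (i + 1)) s :=
    fun i _ => sub_nonneg.2 (clampf_mono _ _ hst)
  have h1 : ∑ i ∈ Finset.range n, (clampf (a i) (a (i + 1)) t - clampf (a i) (a (i + 1)) s)
      = clampf (a 0) (a n) t - clampf (a 0) (a n) s := by
    have e1 := clampf_sum a ha t n
    have e2 := clampf_sum a ha s n
    have : ∑ i ∈ Finset.range n, (clampf (a i) (a (i + 1)) t - clampf (a i) (a (i + 1)) s)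
      = ∑ i ∈ Finset.range n, (clampf (a i) (a (i + 1)) t - a i) -
        ∑ i ∈ Finset.range n, (clampf (a i) (a (i + 1)) s - a i) := by
      rw [← Finset.sum_sub_distrib]; exact Finset.sum_congr rfl fun i _ => by ring
    rw [this, e1, e2]; ring
  calc _ ≤ (∑ i ∈ Finset.range n, (clampf (a i) (a (i + 1)) t - clampf (a i) (a (i + 1)) s)) ^ 2 :=
        Finset.sum_sq_le_sq_sum_of_nonneg h0
    _ ≤ _ := by
        have := clampf_lip (a 0) (a n) s t hst
        have h2 := Finset.sum_nonneg h0
        rw [h1] at h2 ⊢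
        exact pow_le_pow_left₀ h2 this 2

lemma clampf_sq_sum (a : ℕ → ℝ) (ha : Monotone a) (s t : ℝ) (n : ℕ) :
    ∑ i ∈ Finset.range n, (clampf (a i) (a (i + 1)) t - clampf (a i) (a (i + 1)) s) ^ 2
      ≤ (t - s) ^ 2 := by
  rcases le_total s t with h | h
  · exact clampf_sq_sum_aux a ha s t h n
  · have := clampf_sq_sum_aux a ha t s h n
    calc _ = _ := Finset.sum_congr rfl fun i _ => by ring
      _ ≤ _ := this
      _ = _ := by ring

/-- the truncation at dyadic level `k` -/
def trunc (u : G → ℝ) (k : ℤ) (x : G) : ℝ := clampf ((2 : ℝ) ^ k) ((2 : ℝ) ^ (k + 1)) |u x|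

lemma trunc_grad_sum [Group G] (S : Finset G) (u : G → ℝ) :
    ∑' k : ℤ, ∑' x, ENNReal.ofReal (gradSq S (trunc u k) x) ≤
      ∑' x, ENNReal.ofReal (gradSq S u x) := by
  rw [ENNReal.tsum_comm]
  refine ENNReal.tsum_le_tsum fun x => ?_
  rw [ENNReal.tsum_eq_iSup_sum]
  refine iSup_le fun F => ?_
  have hnn : ∀ k ∈ F, 0 ≤ gradSq S (trunc u k) x :=
    fun k _ => Finset.sum_nonneg fun s _ => sq_nonneg _
  rw [← ENNReal.ofReal_sum_of_nonneg hnn]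
  apply ENNReal.ofReal_le_ofReal
  unfold gradSq
  rw [Finset.sum_comm]
  refine Finset.sum_le_sum fun s _ => ?_
  obtain ⟨m, n, hF⟩ : ∃ (m : ℤ) (n : ℕ), F ⊆ (Finset.range n).image (fun i : ℕ => m + (i : ℤ)) := by
    obtain ⟨m, hm⟩ := F.bddBelow
    obtain ⟨M, hM⟩ := F.bddAbove
    refine ⟨m, (M - m + 1).toNat, fun k hk => ?_⟩
    have h1 := hm hk
    have h2 := hM hk
    rw [Finset.mem_image]
    refine ⟨(k - m).toNat, ?_, ?_⟩
    · rw [Finset.mem_range]; omega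
    · omega
  calc ∑ k ∈ F, (trunc u k (x * s) - trunc u k x) ^ 2
      ≤ ∑ k ∈ (Finset.range n).image (fun i : ℕ => m + (i : ℤ)),
        (trunc u k (x * s) - trunc u k x) ^ 2 :=
        Finset.sum_le_sum_of_subset_of_nonneg hF fun _ _ _ => sq_nonneg _
    _ = ∑ i ∈ Finset.range n, (trunc u (m + i) (x * s) - trunc u (m + i) x) ^ 2 := by
        rw [Finset.sum_image]
        intro i _ j _ h
        simpa using h
    _ ≤ (|u (x * s)| - |u x|) ^ 2 := by
        have := clampf_sq_sum (fun i : ℕ => (2 : ℝ) ^ (m + (i : ℤ)))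
          (fun i j hij => zpow_le_zpow_right₀ (by norm_num) (by omega)) |u x| |u (x * s)| n
        simpa [trunc, add_assoc] using this
    _ ≤ (u (x * s) - u x) ^ 2 := by
        rw [← sq_abs (u (x * s) - u x)]
        rw [← sq_abs (|u (x * s)| - |u x|)]
        exact pow_le_pow_left₀ (abs_nonneg _) (abs_abs_sub_abs_le _ _) 2

lemma radius_choice (N : ℕ) (hN : 3 ≤ N) (C₁ : ℝ) (hC₁ : 0 < C₁) (w : ℝ) (hw : 1 ≤ w) :
    ∃ n : ℕ, 1 ≤ n ∧ 2 * w ≤ C₁ * (n : ℝ) ^ N ∧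
      (n : ℝ) ^ 2 ≤ (1 + (2 / C₁) ^ (1 / (N : ℝ))) ^ 2 * w ^ (2 / (N : ℝ)) := by
  have hN0 : (0 : ℝ) < N := by have : 0 < N := by omega
                               exact_mod_cast this
  have hw0 : 0 < w := by linarith
  set c := (2 / C₁) ^ (1 / (N : ℝ)) with hc
  set z := w ^ (1 / (N : ℝ)) with hz
  have hc0 : 0 < c := by positivity
  have hz1 : 1 ≤ z := Real.one_le_rpow hw (by positivity)
  have hcN : c ^ N = 2 / C₁ := by
    rw [hc, ← Real.rpow_natCast, ← Real.rpow_mul (by positivity)]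
    rw [one_div_mul_cancel hN0.ne', Real.rpow_one]
  have hzN : z ^ N = w := by
    rw [hz, ← Real.rpow_natCast, ← Real.rpow_mul (by positivity)]
    rw [one_div_mul_cancel hN0.ne', Real.rpow_one]
  have hz2 : z ^ 2 = w ^ (2 / (N : ℝ)) := by
    rw [hz, ← Real.rpow_natCast, ← Real.rpow_mul (by positivity)]
    congr 1
    push_cast
    ring
  refine ⟨⌈c * z⌉₊, ?_, ?_, ?_⟩
  · exact Nat.one_le_iff_ne_zero.2 (Nat.ceil_pos.2 (by positivity)).ne'
  · have h1 : c * z ≤ ⌈c * z⌉₊ := Nat.le_ceil _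
    have h2 : (c * z) ^ N ≤ (⌈c * z⌉₊ : ℝ) ^ N := pow_le_pow_left₀ (by positivity) h1 N
    rw [mul_pow, hcN, hzN] at h2
    calc 2 * w = C₁ * (2 / C₁ * w) := by field_simp
      _ ≤ _ := by gcongr
  · have h1 : (⌈c * z⌉₊ : ℝ) < c * z + 1 := Nat.ceil_lt_add_one (by positivity)
    have h2 : (⌈c * z⌉₊ : ℝ) ≤ (1 + c) * z := by nlinarith
    rw [← hz2, ← mul_pow]
    exact pow_le_pow_left₀ (by positivity) h2 2

lemma level_est [Group G] (S : Finset G) (N : ℕ) (hN : 3 ≤ N) (C₁ : ℝ) (hC₁ : 0 < C₁)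
    (B : ℕ → Finset G)
    (hB : ∀ n : ℕ, 1 ≤ n → ∀ h ∈ B n, ∃ l : List G, (∀ s ∈ l, s ∈ S) ∧ l.length ≤ n ∧ h = l.prod)
    (hBc : ∀ n : ℕ, 1 ≤ n → C₁ * (n : ℝ) ^ N ≤ ((B n).card : ℝ))
    (q : ℝ) (hq : 0 < q) (hqN : q * (2 / (N : ℝ)) = q - 2)
    (u : G → ℝ) (t : ℝ) (ht0 : 0 ≤ t)
    (ht : ∑' x, ENNReal.ofReal (|u x| ^ q) = ENNReal.ofReal t) (r : ℝ) (hr : 0 < r) :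
    ∑' x, (if 2 * r ≤ |u x| then ENNReal.ofReal (r ^ q) else 0) ≤
      ENNReal.ofReal (2 * (1 + (2 / C₁) ^ (1 / (N : ℝ))) ^ 2 * t ^ (2 / (N : ℝ))) *
        ∑' x, ENNReal.ofReal (gradSq S (fun x => clampf r (2 * r) |u x|) x) := by
  classical
  by_cases hE : ∃ x, 2 * r ≤ |u x|
  swap
  · push Not at hE
    have : ∀ x, (if 2 * r ≤ |u x| then ENNReal.ofReal (r ^ q) else 0) = 0 := fun x =>
      if_neg (not_le.2 (hE x))
    simp [this]
  obtain ⟨x₀, hx₀⟩ := hE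
  have hrq : 0 < r ^ q := by positivity
  -- finite sums are bounded by `t`
  have hfin : ∀ F : Finset G, ∑ x ∈ F, |u x| ^ q ≤ t := by
    intro F
    have h1 := ENNReal.sum_le_tsum (f := fun x => ENNReal.ofReal (|u x| ^ q)) F
    rw [ht, ← ENNReal.ofReal_sum_of_nonneg (fun x _ => by positivity)] at h1
    exact (ENNReal.ofReal_le_ofReal_iff ht0).1 h1
  have hw : 1 ≤ t / r ^ q := by
    rw [le_div_iff₀ hrq, one_mul]
    have := hfin {x₀}
    rw [Finset.sum_singleton] at this
    refine le_trans (Real.rpow_le_rpow hr.le (by linarith) hq.le) this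
  obtain ⟨n, hn1, hn2, hn3⟩ := radius_choice N hN C₁ hC₁ _ hw
  set v : G → ℝ := fun x => clampf r (2 * r) |u x| with hv
  set D := ∑' x, ENNReal.ofReal (gradSq S v x) with hD
  have hcard : 2 * (t / r ^ q) ≤ ((B n).card : ℝ) := hn2.trans (hBc n hn1)
  have hcard0 : (0 : ℝ) < ((B n).card : ℝ) := by linarith
  -- pointwise bound
  have hpt : ∀ x, (if 2 * r ≤ |u x| then ENNReal.ofReal (r ^ 2 * ((B n).card / 2)) else 0) ≤
      ∑ h ∈ B n, ENNReal.ofReal ((v (x * h) - v x) ^ 2) := by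
    intro x
    split_ifs with hx
    swap
    · exact zero_le
    rw [← ENNReal.ofReal_sum_of_nonneg (fun x _ => by positivity)]
    apply ENNReal.ofReal_le_ofReal
    have hbig : (((B n).filter (fun h => r < |u (x * h)|)).card : ℝ) * r ^ q ≤ t := by
      have h1 := hfin (((B n).filter (fun h => r < |u (x * h)|)).map (mulLeftEmbedding x))
      rw [Finset.sum_map] at h1
      refine le_trans ?_ h1
      rw [← nsmul_eq_mul]
      refine Finset.card_nsmul_le_sum _ _ _ fun h hh => ?_
      have := (Finset.mem_filter.1 hh).2
      exact Real.rpow_le_rpow hr.le this.le hq.le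
    have hbig' : (((B n).filter (fun h => r < |u (x * h)|)).card : ℝ) ≤ (B n).card / 2 := by
      rw [← le_div_iff₀ hrq] at hbig
      linarith
    have hsplit := Finset.card_filter_add_card_filter_not (s := B n) (fun h => r < |u (x * h)|)
    have hsplit' : (((B n).filter (fun h => r < |u (x * h)|)).card : ℝ) +
      (((B n).filter (fun h => ¬ r < |u (x * h)|)).card : ℝ) = (B n).card := by
      exact_mod_cast hsplit
    calc r ^ 2 * ((B n).card / 2)
        ≤ r ^ 2 * (((B n).filter (fun h => ¬ r < |u (x * h)|)).card : ℝ) := by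
          gcongr; linarith
      _ = ∑ h ∈ (B n).filter (fun h => ¬ r < |u (x * h)|), r ^ 2 := by
          rw [Finset.sum_const, nsmul_eq_mul, mul_comm]
      _ = ∑ h ∈ (B n).filter (fun h => ¬ r < |u (x * h)|), (v (x * h) - v x) ^ 2 := by
          refine Finset.sum_congr rfl fun h hh => ?_
          have h1 := not_lt.1 (Finset.mem_filter.1 hh).2
          have e1 : v (x * h) = r := by
            simp only [hv, clampf]
            rw [max_eq_right h1, min_eq_left (by linarith)]
          have e2 : v x = 2 * r := by
            simp only [hv, clampf]
            rw [max_eq_left (by linarith), min_eq_right hx]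
          rw [e1, e2]; ring
      _ ≤ _ := Finset.sum_le_sum_of_subset_of_nonneg (Finset.filter_subset _ _)
          fun _ _ _ => sq_nonneg _
  have hsum : ∑' x, (if 2 * r ≤ |u x| then ENNReal.ofReal (r ^ 2 * ((B n).card / 2)) else 0) ≤
      ENNReal.ofReal ((B n).card * (n : ℝ) ^ 2) * D := by
    refine (ENNReal.tsum_le_tsum hpt).trans ?_
    rw [Summable.tsum_finsetSum (fun _ _ => ENNReal.summable)]
    calc ∑ h ∈ B n, ∑' x, ENNReal.ofReal ((v (x * h) - v x) ^ 2)
        ≤ ∑ h ∈ B n, ENNReal.ofReal ((n : ℝ) ^ 2) * D := by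
          refine Finset.sum_le_sum fun h hh => ?_
          obtain ⟨l, hl1, hl2, rfl⟩ := hB n hn1 h hh
          refine (translate_list S v l hl1).trans ?_
          gcongr
      _ = _ := by
          rw [Finset.sum_const, nsmul_eq_mul, ENNReal.ofReal_mul (by positivity), mul_assoc,
            ENNReal.ofReal_natCast]
  calc ∑' x, (if 2 * r ≤ |u x| then ENNReal.ofReal (r ^ q) else 0)
      = ENNReal.ofReal (r ^ (q - 2) * (2 / (B n).card)) *
        ∑' x, (if 2 * r ≤ |u x| then ENNReal.ofReal (r ^ 2 * ((B n).card / 2)) else 0) := by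
        rw [← ENNReal.tsum_mul_left]
        refine tsum_congr fun x => ?_
        split_ifs
        · rw [← ENNReal.ofReal_mul (by positivity)]
          congr 1
          have : r ^ q = r ^ (q - 2) * r ^ 2 := by
            rw [← Real.rpow_natCast r 2, ← Real.rpow_add hr]
            congr 1
            push_cast; ring
          rw [this]
          field_simp
        · simp
    _ ≤ ENNReal.ofReal (r ^ (q - 2) * (2 / (B n).card)) *
        (ENNReal.ofReal ((B n).card * (n : ℝ) ^ 2) * D) := by gcongr
    _ = ENNReal.ofReal (r ^ (q - 2) * 2 * (n : ℝ) ^ 2) * D := by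
        rw [← mul_assoc, ← ENNReal.ofReal_mul (by positivity)]
        congr 2
        field_simp
    _ ≤ _ := by
        refine mul_le_mul_left (ENNReal.ofReal_le_ofReal ?_) _
        have e : (t / r ^ q) ^ (2 / (N : ℝ)) * r ^ (q - 2) = t ^ (2 / (N : ℝ)) := by
          rw [Real.div_rpow ht0 hrq.le, ← Real.rpow_mul hr.le]
          rw [hqN]
          field_simp
        calc r ^ (q - 2) * 2 * (n : ℝ) ^ 2
            ≤ r ^ (q - 2) * 2 * ((1 + (2 / C₁) ^ (1 / (N : ℝ))) ^ 2 * (t / r ^ q) ^ (2 / (N : ℝ))) := by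
              gcongr
          _ = 2 * (1 + (2 / C₁) ^ (1 / (N : ℝ))) ^ 2 * ((t / r ^ q) ^ (2 / (N : ℝ)) * r ^ (q - 2)) := by
              ring
          _ = _ := by rw [e]

lemma sobolev_est [Group G] (S : Finset G) (N : ℕ) (hN : 3 ≤ N) (C₁ : ℝ) (hC₁ : 0 < C₁)
    (B : ℕ → Finset G)
    (hB : ∀ n : ℕ, 1 ≤ n → ∀ h ∈ B n, ∃ l : List G, (∀ s ∈ l, s ∈ S) ∧ l.length ≤ n ∧ h = l.prod)
    (hBc : ∀ n : ℕ, 1 ≤ n → C₁ * (n : ℝ) ^ N ≤ ((B n).card : ℝ)) :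
    ∃ K : ℝ, 0 < K ∧ ∀ u : G → ℝ, MemD12 S N u →
      (∑' x, |u x| ^ (2 * (N : ℝ) / ((N : ℝ) - 2))) ≤
        (K * D12Norm S u) ^ (2 * (N : ℝ) / ((N : ℝ) - 2)) := by
  have hN3 : (3 : ℝ) ≤ N := by exact_mod_cast hN
  set q := 2 * (N : ℝ) / ((N : ℝ) - 2) with hqd
  have hN2 : (0 : ℝ) < (N : ℝ) - 2 := by linarith
  have hN0 : (0 : ℝ) < (N : ℝ) := by linarith
  have hq : 0 < q := by positivity
  have hqN : q * (2 / (N : ℝ)) = q - 2 := by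
    rw [hqd]; field_simp; ring
  set K₀ := 2 * (1 + (2 / C₁) ^ (1 / (N : ℝ))) ^ 2 with hK₀
  have hK₀p : 0 < K₀ := by positivity
  refine ⟨((4 : ℝ) ^ q * K₀) ^ ((1 : ℝ) / 2), by positivity, fun u ⟨hu1, hu2⟩ => ?_⟩
  set t := ∑' x, |u x| ^ q with ht
  have ht0 : 0 ≤ t := tsum_nonneg fun x => by positivity
  have hte : ∑' x, ENNReal.ofReal (|u x| ^ q) = ENNReal.ofReal t :=
    (ENNReal.ofReal_tsum_of_nonneg (fun x => by positivity) hu1).symm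
  set d := ∑' x, gradSq S u x with hd
  have hgnn : ∀ x, 0 ≤ gradSq S u x := fun x => Finset.sum_nonneg fun s _ => sq_nonneg _
  have hd0 : 0 ≤ d := tsum_nonneg hgnn
  have hde : ∑' x, ENNReal.ofReal (gradSq S u x) = ENNReal.ofReal d :=
    (ENNReal.ofReal_tsum_of_nonneg hgnn hu2).symm
  have key : t ≤ (4 : ℝ) ^ q * (K₀ * t ^ (2 / (N : ℝ)) * d) := by
    rw [← ENNReal.ofReal_le_ofReal_iff (by positivity), ← hte]
    calc ∑' x, ENNReal.ofReal (|u x| ^ q)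
        ≤ ∑' x, ∑' k : ℤ, ENNReal.ofReal ((4 : ℝ) ^ q) *
          (if 2 * (2 : ℝ) ^ k ≤ |u x| then ENNReal.ofReal (((2 : ℝ) ^ k) ^ q) else 0) := by
          refine ENNReal.tsum_le_tsum fun x => ?_
          rcases eq_or_lt_of_le (abs_nonneg (u x)) with h0 | h0
          · rw [← h0, Real.zero_rpow hq.ne']; simp
          obtain ⟨k, hk1, hk2⟩ := exists_mem_Ico_zpow h0 (by norm_num : (1 : ℝ) < 2)
          refine le_trans ?_ (ENNReal.le_tsum (k - 1))
          have e : 2 * (2 : ℝ) ^ (k - 1) = 2 ^ k := by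
            rw [zpow_sub₀ (by norm_num)]; simp; ring
          rw [if_pos (by rw [e]; exact hk1), ← ENNReal.ofReal_mul (by positivity),
            ← Real.mul_rpow (by positivity) (by positivity)]
          apply ENNReal.ofReal_le_ofReal
          refine Real.rpow_le_rpow h0.le ?_ hq.le
          have : (2 : ℝ) ^ (k + 1) = 2 * 2 ^ k := by rw [zpow_add₀ (by norm_num)]; simp; ring
          linarith
      _ = ENNReal.ofReal ((4 : ℝ) ^ q) * ∑' k : ℤ, ∑' x,
          (if 2 * (2 : ℝ) ^ k ≤ |u x| then ENNReal.ofReal (((2 : ℝ) ^ k) ^ q) else 0) := by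
          rw [ENNReal.tsum_comm, ← ENNReal.tsum_mul_left]
          simp_rw [ENNReal.tsum_mul_left]
      _ ≤ ENNReal.ofReal ((4 : ℝ) ^ q) * ∑' k : ℤ, ENNReal.ofReal (K₀ * t ^ (2 / (N : ℝ))) *
          ∑' x, ENNReal.ofReal (gradSq S (trunc u k) x) := by
          gcongr with k
          have := level_est S N hN C₁ hC₁ B hB hBc q hq hqN u t ht0 hte ((2 : ℝ) ^ k) (by positivity)
          have e : (fun x => clampf ((2 : ℝ) ^ k) (2 * (2 : ℝ) ^ k) |u x|) = trunc u k := by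
            funext x
            have : (2 : ℝ) ^ (k + 1) = 2 * 2 ^ k := by rw [zpow_add₀ (by norm_num)]; simp; ring
            rw [trunc, this]
          rw [e] at this
          exact this
      _ ≤ ENNReal.ofReal ((4 : ℝ) ^ q) * (ENNReal.ofReal (K₀ * t ^ (2 / (N : ℝ))) *
          ENNReal.ofReal d) := by
          rw [ENNReal.tsum_mul_left, ← hde]
          gcongr
          exact trunc_grad_sum S u
      _ = _ := by
          rw [← ENNReal.ofReal_mul (by positivity), ← ENNReal.ofReal_mul (by positivity)]
  have hrhs : (((4 : ℝ) ^ q * K₀) ^ ((1 : ℝ) / 2) * D12Norm S u) ^ q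
      = ((4 : ℝ) ^ q * K₀ * d) ^ (q / 2) := by
    unfold D12Norm
    rw [← Real.mul_rpow (by positivity) hd0, ← Real.rpow_mul (by positivity)]
    congr 1
    ring
  rw [hrhs]
  rcases eq_or_lt_of_le ht0 with h0 | h0
  · rw [← h0]; positivity
  have h1 : t ^ (1 - 2 / (N : ℝ)) ≤ (4 : ℝ) ^ q * K₀ * d := by
    rw [Real.rpow_sub h0, Real.rpow_one, div_le_iff₀ (by positivity)]
    linarith
  have h2 := Real.rpow_le_rpow (by positivity) h1 (by positivity : 0 ≤ q / 2)
  rw [← Real.rpow_mul h0.le] at h2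
  have : (1 - 2 / (N : ℝ)) * (q / 2) = 1 := by rw [hqd]; field_simp
  rwa [this, Real.rpow_one] at h2

lemma fiber_sum (l : G → ℕ) (A : ℝ) (b : ℝ)
    (hcard : ∀ j, ∃ F : Finset G, (∀ y, l y = j → y ∈ F) ∧ (F.card : ℝ) ≤ A * b ^ j)
    (φ : ℕ → ℝ) (hφ : ∀ j, 0 ≤ φ j) :
    ∑' y, ENNReal.ofReal (φ (l y)) ≤ ∑' j, ENNReal.ofReal (A * b ^ j * φ j) := by
  classical
  calc ∑' y, ENNReal.ofReal (φ (l y))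
      ≤ ∑' y, ∑' j, (if l y = j then ENNReal.ofReal (φ j) else 0) := by
        refine ENNReal.tsum_le_tsum fun y => ?_
        refine le_trans ?_ (ENNReal.le_tsum (l y))
        simp
    _ = ∑' j, ∑' y, (if l y = j then ENNReal.ofReal (φ j) else 0) := ENNReal.tsum_comm
    _ ≤ _ := by
        refine ENNReal.tsum_le_tsum fun j => ?_
        obtain ⟨F, hF, hc⟩ := hcard j
        rw [tsum_eq_sum (s := F) (fun y hy => if_neg fun h => hy (hF y h))]
        calc ∑ y ∈ F, (if l y = j then ENNReal.ofReal (φ j) else 0)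
            ≤ ∑ y ∈ F, ENNReal.ofReal (φ j) := by
              refine Finset.sum_le_sum fun y _ => ?_
              split_ifs
              · exact le_rfl
              · exact zero_le
          _ = ENNReal.ofReal (F.card * φ j) := by
              rw [Finset.sum_const, nsmul_eq_mul, ENNReal.ofReal_mul (by positivity),
                ENNReal.ofReal_natCast]
          _ ≤ _ := ENNReal.ofReal_le_ofReal (mul_le_mul_of_nonneg_right hc (hφ j))

lemma geom_near (b : ℝ) (hb : 1 < b) (m : ℕ) (a : ℝ) (ha : 0 ≤ a) :
    ∑' j : ℕ, ENNReal.ofReal (if j ≤ m then a * b ^ j else 0) ≤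
      ENNReal.ofReal (a * (b / (b - 1)) * b ^ m) := by
  have hb1 : 0 < b - 1 := by linarith
  rw [tsum_eq_sum (s := Finset.range (m + 1))]
  · rw [← ENNReal.ofReal_sum_of_nonneg]
    · apply ENNReal.ofReal_le_ofReal
      have : ∑ j ∈ Finset.range (m + 1), (if j ≤ m then a * b ^ j else 0)
          = a * ∑ j ∈ Finset.range (m + 1), b ^ j := by
        rw [Finset.mul_sum]
        refine Finset.sum_congr rfl fun j hj => ?_
        rw [if_pos (by simpa [Nat.lt_succ_iff] using hj)]
      rw [this, geom_sum_eq hb.ne', mul_assoc]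
      refine mul_le_mul_of_nonneg_left ?_ ha
      rw [div_mul_eq_mul_div]
      refine div_le_div_of_nonneg_right ?_ hb1.le
      rw [pow_succ]; linarith
    · intro j _
      split_ifs
      · positivity
      · exact le_rfl
  · intro j hj
    rw [if_neg (by simpa [Nat.lt_succ_iff] using hj), ENNReal.ofReal_zero]

lemma geom_far (ρ : ℝ) (h0 : 0 < ρ) (h1 : ρ ≤ 1 / 2) (m : ℕ) (a : ℝ) (ha : 0 ≤ a) :
    ∑' j : ℕ, ENNReal.ofReal (if m < j then a * ρ ^ j else 0) ≤
      ENNReal.ofReal (a * 2 * ρ ^ (m + 1)) := by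
  rw [← (ENNReal.summable.sum_add_tsum_nat_add' (k := m + 1)), Finset.sum_eq_zero, zero_add]
  · have : ∀ i : ℕ, ENNReal.ofReal (if m < i + (m + 1) then a * ρ ^ (i + (m + 1)) else 0)
        = ENNReal.ofReal (a * ρ ^ (m + 1)) * ENNReal.ofReal (ρ ^ i) := by
      intro i
      rw [if_pos (by omega), ← ENNReal.ofReal_mul (by positivity)]
      congr 1; ring
    simp_rw [this]
    rw [ENNReal.tsum_mul_left, ← ENNReal.ofReal_tsum_of_nonneg (fun i => by positivity)
      (summable_geometric_of_lt_one h0.le (by linarith)),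
      tsum_geometric_of_lt_one h0.le (by linarith), ← ENNReal.ofReal_mul (by positivity)]
    apply ENNReal.ofReal_le_ofReal
    have : (1 - ρ)⁻¹ ≤ 2 := by
      rw [inv_le_comm₀ (by linarith) (by norm_num)]; linarith
    calc a * ρ ^ (m + 1) * (1 - ρ)⁻¹ ≤ a * ρ ^ (m + 1) * 2 := by gcongr
      _ = _ := by ring
  · intro j hj
    rw [if_neg (by simpa [Nat.lt_succ_iff] using hj), ENNReal.ofReal_zero]

lemma hls_half (N : ℕ) (hN : 3 ≤ N) (α : ℝ) (hα : 0 < α) (hαN : α < N) (A c : ℝ) (hA : 0 < A)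
    (hc : 0 < c) :
    ∃ K : ℝ, 0 < K ∧ ∀ (l : G → ℕ) (R : G → ℝ),
      (∀ j, ∃ F : Finset G, (∀ y, l y = j → y ∈ F) ∧ (F.card : ℝ) ≤ A * ((2 : ℝ) ^ N) ^ j) →
      (∀ y, 0 ≤ R y) → (∀ y, R y ≤ c * ((2 : ℝ) ^ (α - N)) ^ (l y)) →
      ∀ f : G → ℝ, (∀ y, 0 ≤ f y) →
      ∑' y, ENNReal.ofReal (f y ^ (2 * (N : ℝ) / (N + α))) ≤ 1 →
      ∀ s : ℝ, 0 ≤ s → s ≤ 1 →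
      ∑' y, (if f y ≤ s then ENNReal.ofReal (s * R y * f y) else 0) ≤
        ENNReal.ofReal (K * s ^ (2 * (N : ℝ) / (N + α))) := by
  have hN3 : (3 : ℝ) ≤ N := by exact_mod_cast hN
  have hN0 : (0 : ℝ) < (N : ℝ) := by linarith
  have hNα : 0 < (N : ℝ) - α := by linarith
  set q := 2 * (N : ℝ) / (N + α) with hq
  set r := 2 * (N : ℝ) / (N - α) with hr
  have hq0 : 0 < q := by positivity
  have hr0 : 0 < r := by positivity
  have hqr : q.HolderConjugate r := by
    rw [Real.holderConjugate_iff]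
    constructor
    · rw [hq, lt_div_iff₀ (by positivity)]; linarith
    · rw [hq, hr]; field_simp; ring
  set b := (2 : ℝ) ^ α with hb
  have hb1 : 1 < b := Real.one_lt_rpow (by norm_num) hα
  have hb1' : 0 < b - 1 := by linarith
  set β := (2 : ℝ) ^ (α - N) with hβ
  have hβ0 : 0 < β := by positivity
  have e1 : (2 : ℝ) ^ N * β = b := by
    rw [hβ, hb, ← Real.rpow_natCast, ← Real.rpow_add (by norm_num)]
    congr 1; ring
  have e2 : (2 : ℝ) ^ N * β ^ r = ((2 : ℝ) ^ N)⁻¹ := by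
    rw [hβ, ← Real.rpow_natCast, ← Real.rpow_mul (by norm_num), ← Real.rpow_neg (by norm_num),
      ← Real.rpow_add (by norm_num)]
    congr 1
    rw [hr]; field_simp; ring
  set ρ := ((2 : ℝ) ^ N)⁻¹ with hρ
  have hρ0 : 0 < ρ := by positivity
  have hρ1 : ρ ≤ 1 / 2 := by
    rw [hρ, one_div]
    apply inv_anti₀ (by norm_num)
    calc (2 : ℝ) = 2 ^ 1 := by norm_num
      _ ≤ 2 ^ N := pow_le_pow_right₀ (by norm_num) (by omega)
  refine ⟨A * c * (b / (b - 1)) + 1 + A * c ^ r * 2, by positivity, ?_⟩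
  intro l R hcard hR0 hR f hf hfq s hs0 hs1
  rcases eq_or_lt_of_le hs0 with h0 | hs
  · rw [← h0, Real.zero_rpow hq0.ne']; simp
  have hw1 : 1 ≤ s ^ (-(q / N)) :=
    Real.one_le_rpow_of_pos_of_le_one_of_nonpos hs hs1 (by
      have : 0 < q / N := by positivity
      linarith)
  obtain ⟨m, hm1, hm2⟩ := exists_nat_pow_near hw1 (by norm_num : (1 : ℝ) < 2)
  have hnear : s ^ 2 * b ^ m ≤ s ^ q := by
    have : b ^ m ≤ s ^ (-(q / N) * α) := by
      rw [Real.rpow_mul hs.le]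
      calc b ^ m = ((2 : ℝ) ^ m) ^ α := by
            rw [hb, ← Real.rpow_natCast, ← Real.rpow_natCast, ← Real.rpow_mul (by norm_num),
              ← Real.rpow_mul (by norm_num), mul_comm]
        _ ≤ _ := Real.rpow_le_rpow (by positivity) hm1 hα.le
    calc s ^ 2 * b ^ m ≤ s ^ 2 * s ^ (-(q / N) * α) := by gcongr
      _ = s ^ q := by
        rw [← Real.rpow_natCast s 2, ← Real.rpow_add hs]
        congr 1
        rw [hq]; push_cast; field_simp; ring
  have hfar : ρ ^ (m + 1) ≤ s ^ q := by
    calc ρ ^ (m + 1) = (((2 : ℝ) ^ (m + 1)) ^ N)⁻¹ := by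
          rw [hρ, inv_pow, ← pow_mul, ← pow_mul, mul_comm]
      _ ≤ ((s ^ (-(q / N))) ^ N)⁻¹ := by
          apply inv_anti₀ (by positivity)
          exact pow_le_pow_left₀ (by positivity) hm2.le N
      _ = s ^ q := by
          rw [← Real.rpow_natCast, ← Real.rpow_mul hs.le, ← Real.rpow_neg hs.le]
          congr 1; field_simp
  set φ₁ : ℕ → ℝ := fun j => if j ≤ m then s ^ 2 * c * β ^ j else 0 with hφ₁
  set φ₂ : ℕ → ℝ := fun j => if m < j then c ^ r * (β ^ r) ^ j else 0 with hφ₂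
  have hφ₁0 : ∀ j, 0 ≤ φ₁ j := fun j => by
    simp only [hφ₁]; split_ifs
    · positivity
    · exact le_rfl
  have hφ₂0 : ∀ j, 0 ≤ φ₂ j := fun j => by
    simp only [hφ₂]; split_ifs
    · positivity
    · exact le_rfl
  have hpt : ∀ y, (if f y ≤ s then ENNReal.ofReal (s * R y * f y) else 0) ≤
      ENNReal.ofReal (φ₁ (l y)) + (ENNReal.ofReal (s ^ q) * ENNReal.ofReal (f y ^ q) +
        ENNReal.ofReal (φ₂ (l y))) := by
    intro y
    split_ifs with hy
    swap
    · exact zero_le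
    have hfy := hf y
    have hRy := hR0 y
    rw [← ENNReal.ofReal_mul (by positivity), ← ENNReal.ofReal_add (by positivity) (hφ₂0 _),
      ← ENNReal.ofReal_add (hφ₁0 _) (add_nonneg (by positivity) (hφ₂0 _))]
    apply ENNReal.ofReal_le_ofReal
    by_cases hl : l y ≤ m
    · have : s * R y * f y ≤ φ₁ (l y) := by
        simp only [hφ₁, if_pos hl]
        calc s * R y * f y ≤ s * (c * β ^ (l y)) * s := by
              gcongr
              exact hR y
          _ = _ := by ring
      have h3 := hφ₂0 (l y)
      have h4 : 0 ≤ s ^ q * f y ^ q := by positivity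
      linarith
    · have h2 : R y ^ r ≤ φ₂ (l y) := by
        simp only [hφ₂, if_pos (not_le.1 hl)]
        calc R y ^ r ≤ (c * β ^ (l y)) ^ r := Real.rpow_le_rpow hRy (hR y) hr0.le
          _ = _ := by
            rw [Real.mul_rpow hc.le (by positivity), ← Real.rpow_natCast, ← Real.rpow_natCast,
              ← Real.rpow_mul hβ0.le, ← Real.rpow_mul hβ0.le, mul_comm r]
      have h3 := hφ₁0 (l y)
      have hy := Real.young_inequality_of_nonneg (mul_nonneg hs.le hfy) hRy hqr
      have hy1 : (s * f y) ^ q / q ≤ (s * f y) ^ q := div_le_self (by positivity) hqr.lt.le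
      have hy2 : R y ^ r / r ≤ R y ^ r := div_le_self (by positivity) hqr.symm.lt.le
      rw [Real.mul_rpow hs.le hfy] at hy1 hy
      nlinarith
  refine (ENNReal.tsum_le_tsum hpt).trans ?_
  rw [ENNReal.tsum_add, ENNReal.tsum_add, ENNReal.tsum_mul_left]
  have b1 : ∑' y, ENNReal.ofReal (φ₁ (l y)) ≤ ENNReal.ofReal (A * c * (b / (b - 1)) * s ^ q) := by
    refine (fiber_sum l A _ hcard φ₁ hφ₁0).trans ?_
    have : ∀ j, A * ((2 : ℝ) ^ N) ^ j * φ₁ j = if j ≤ m then (A * c * s ^ 2) * b ^ j else 0 := by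
      intro j
      simp only [hφ₁, ← e1]
      split_ifs
      · rw [mul_pow]; ring
      · simp
    simp_rw [this]
    refine (geom_near b hb1 m _ (by positivity)).trans (ENNReal.ofReal_le_ofReal ?_)
    calc A * c * s ^ 2 * (b / (b - 1)) * b ^ m = A * c * (b / (b - 1)) * (s ^ 2 * b ^ m) := by ring
      _ ≤ _ := by gcongr
  have b2 : ∑' y, ENNReal.ofReal (φ₂ (l y)) ≤ ENNReal.ofReal (A * c ^ r * 2 * s ^ q) := by
    refine (fiber_sum l A _ hcard φ₂ hφ₂0).trans ?_
    have : ∀ j, A * ((2 : ℝ) ^ N) ^ j * φ₂ j = if m < j then (A * c ^ r) * ρ ^ j else 0 := by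
      intro j
      simp only [hφ₂, ← e2]
      split_ifs
      · rw [mul_pow]; ring
      · simp
    simp_rw [this]
    refine (geom_far ρ hρ0 hρ1 m _ (by positivity)).trans (ENNReal.ofReal_le_ofReal ?_)
    gcongr
  calc _ ≤ ENNReal.ofReal (A * c * (b / (b - 1)) * s ^ q) + (ENNReal.ofReal (s ^ q) * 1 +
        ENNReal.ofReal (A * c ^ r * 2 * s ^ q)) := by gcongr
    _ = _ := by
      rw [mul_one, ← ENNReal.ofReal_add (by positivity) (by positivity),
        ← ENNReal.ofReal_add (by positivity) (by positivity)]
      congr 1; ring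

lemma hls_bilinear (N : ℕ) (hN : 3 ≤ N) (α : ℝ) (hα : 0 < α) (hαN : α < N) (A c : ℝ) (hA : 0 < A)
    (hc : 0 < c) (l : G → G → ℕ) (R : G → G → ℝ)
    (hcard : ∀ x j, ∃ F : Finset G, (∀ y, l x y = j → y ∈ F) ∧
      (F.card : ℝ) ≤ A * ((2 : ℝ) ^ N) ^ j)
    (hR0 : ∀ x y, 0 ≤ R x y) (hRs : ∀ x y, R x y = R y x)
    (hR : ∀ x y, R x y ≤ c * ((2 : ℝ) ^ (α - N)) ^ (l x y)) :
    ∃ K : ℝ, 0 < K ∧ ∀ f g : G → ℝ, (∀ y, 0 ≤ f y) → (∀ y, 0 ≤ g y) →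
      ∑' y, ENNReal.ofReal (f y ^ (2 * (N : ℝ) / (N + α))) ≤ 1 →
      ∑' y, ENNReal.ofReal (g y ^ (2 * (N : ℝ) / (N + α))) ≤ 1 →
      ∑' x, ∑' y, ENNReal.ofReal (g x * R x y * f y) ≤ ENNReal.ofReal K := by
  classical
  have hN3 : (3 : ℝ) ≤ N := by exact_mod_cast hN
  obtain ⟨K, hK, H⟩ := hls_half (G := G) N hN α hα hαN A c hA hc
  refine ⟨2 * K, by positivity, fun f g hf hg hfq hgq => ?_⟩
  set q := 2 * (N : ℝ) / (N + α) with hq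
  have hq0 : 0 < q := by positivity
  have hle1 : ∀ f : G → ℝ, (∀ y, 0 ≤ f y) → ∑' y, ENNReal.ofReal (f y ^ q) ≤ 1 →
      ∀ y, f y ≤ 1 := by
    intro f hf hfq y
    have h1 := (ENNReal.le_tsum (f := fun y => ENNReal.ofReal (f y ^ q)) y).trans hfq
    rw [ENNReal.ofReal_le_one] at h1
    by_contra h
    exact absurd h1 (not_le.2 (Real.one_lt_rpow (not_le.1 h) hq0))
  have half : ∀ f g : G → ℝ, (∀ y, 0 ≤ f y) → (∀ y, 0 ≤ g y) →
      ∑' y, ENNReal.ofReal (f y ^ q) ≤ 1 → ∑' y, ENNReal.ofReal (g y ^ q) ≤ 1 →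
      ∑' x, ∑' y, (if f y ≤ g x then ENNReal.ofReal (g x * R x y * f y) else 0) ≤
        ENNReal.ofReal K := by
    intro f g hf hg hfq hgq
    calc _ ≤ ∑' x, ENNReal.ofReal (K * g x ^ q) :=
          ENNReal.tsum_le_tsum fun x => H (l x) (R x) (hcard x) (hR0 x) (hR x) f hf hfq (g x) (hg x)
            (hle1 g hg hgq x)
      _ = ENNReal.ofReal K * ∑' x, ENNReal.ofReal (g x ^ q) := by
          rw [← ENNReal.tsum_mul_left]
          exact tsum_congr fun x => ENNReal.ofReal_mul hK.le
      _ ≤ ENNReal.ofReal K * 1 := by gcongr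
      _ = _ := mul_one _
  calc ∑' x, ∑' y, ENNReal.ofReal (g x * R x y * f y)
      ≤ ∑' x, ∑' y, ((if f y ≤ g x then ENNReal.ofReal (g x * R x y * f y) else 0) +
        (if g x ≤ f y then ENNReal.ofReal (f y * R y x * g x) else 0)) := by
        refine ENNReal.tsum_le_tsum fun x => ENNReal.tsum_le_tsum fun y => ?_
        rcases le_total (f y) (g x) with h | h
        · rw [if_pos h]; exact le_self_add
        · rw [if_pos h, hRs y x]
          refine le_trans (le_of_eq ?_) le_add_self
          congr 1; ring
    _ = ∑' x, ∑' y, (if f y ≤ g x then ENNReal.ofReal (g x * R x y * f y) else 0) +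
        ∑' y, ∑' x, (if g x ≤ f y then ENNReal.ofReal (f y * R y x * g x) else 0) := by
        simp_rw [ENNReal.tsum_add]
        congr 1
        exact ENNReal.tsum_comm
    _ ≤ ENNReal.ofReal K + ENNReal.ofReal K :=
        add_le_add (half f g hf hg hfq hgq) (half g f hg hf hgq hfq)
    _ = _ := by
        rw [← ENNReal.ofReal_add hK.le hK.le]; congr 1; ring

lemma hls_norm (N : ℕ) (hN : 3 ≤ N) (α : ℝ) (hα : 0 < α) (hαN : α < N) (A c : ℝ) (hA : 0 < A)
    (hc : 0 < c) (l : G → G → ℕ) (R : G → G → ℝ)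
    (hcard : ∀ x j, ∃ F : Finset G, (∀ y, l x y = j → y ∈ F) ∧
      (F.card : ℝ) ≤ A * ((2 : ℝ) ^ N) ^ j)
    (hR0 : ∀ x y, 0 ≤ R x y) (hRs : ∀ x y, R x y = R y x)
    (hR : ∀ x y, R x y ≤ c * ((2 : ℝ) ^ (α - N)) ^ (l x y)) :
    ∃ K : ℝ, 0 < K ∧ ∀ f : G → ℝ, (∀ y, 0 ≤ f y) → ∀ M : ℝ, 0 < M →
      ∑' y, ENNReal.ofReal (f y ^ (2 * (N : ℝ) / (N + α))) ≤
        ENNReal.ofReal (M ^ (2 * (N : ℝ) / (N + α))) →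
      lpNorm (2 * (N : ℝ) / (N - α)) (conv R f) ≤ K * M := by
  classical
  have hN3 : (3 : ℝ) ≤ N := by exact_mod_cast hN
  have hNα : 0 < (N : ℝ) - α := by linarith
  obtain ⟨K, hK, H⟩ := hls_bilinear N hN α hα hαN A c hA hc l R hcard hR0 hRs hR
  refine ⟨K, hK, fun f hf M hM hfM => ?_⟩
  set q := 2 * (N : ℝ) / (N + α) with hq
  set r := 2 * (N : ℝ) / (N - α) with hr
  have hq0 : 0 < q := by positivity
  have hr0 : 0 < r := by positivity
  have hqr : (r - 1) * q = r := by
    rw [hq, hr]; field_simp; ring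
  have hqr2 : r * (1 / q) = r - 1 := by
    rw [← hqr]; field_simp
    linarith
  set F : G → ℝ := fun y => f y / M with hF
  have hF0 : ∀ y, 0 ≤ F y := fun y => div_nonneg (hf y) hM.le
  have hFq : ∑' y, ENNReal.ofReal (F y ^ q) ≤ 1 := by
    have : ∀ y, ENNReal.ofReal (F y ^ q) =
        ENNReal.ofReal ((M ^ q)⁻¹) * ENNReal.ofReal (f y ^ q) := by
      intro y
      rw [← ENNReal.ofReal_mul (by positivity)]
      congr 1
      rw [hF, Real.div_rpow (hf y) hM.le]; field_simp
    simp_rw [this]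
    rw [ENNReal.tsum_mul_left]
    calc _ ≤ ENNReal.ofReal ((M ^ q)⁻¹) * ENNReal.ofReal (M ^ q) := by gcongr
      _ = 1 := by
        rw [← ENNReal.ofReal_mul (by positivity), inv_mul_cancel₀ (by positivity),
          ENNReal.ofReal_one]
  set h : G → ℝ := conv R F with hh
  have hconv : ∀ x, conv R f x = M * h x := by
    intro x
    simp only [hh, conv]
    rw [← tsum_mul_left]
    refine tsum_congr fun y => ?_
    simp only [hF]; field_simp
  have hnn : ∀ x y, 0 ≤ R x y * F y := fun x y => mul_nonneg (hR0 x y) (hF0 y)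
  have hh0 : ∀ x, 0 ≤ h x := fun x => tsum_nonneg fun y => hnn x y
  -- pointwise finiteness
  have hsummable : ∀ x, Summable fun y => R x y * F y := by
    intro x
    have h1 := H F (fun y => if y = x then 1 else 0) hF0
      (fun y => by split_ifs <;> norm_num) hFq (by
        rw [tsum_eq_single x]
        · simp
        · intro y hy
          simp [hy, Real.zero_rpow hq0.ne'])
    have h2 := (ENNReal.le_tsum (f := fun z => ∑' y, ENNReal.ofReal
      ((if z = x then (1 : ℝ) else 0) * R z y * F y)) x).trans h1
    simp only [if_true, one_mul] at h2
    have h3 : ∑' y, ENNReal.ofReal (R x y * F y) ≠ ∞ := ne_top_of_le_ne_top ENNReal.ofReal_ne_top h2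
    have := ENNReal.summable_toReal h3
    refine this.congr fun y => ?_
    rw [ENNReal.toReal_ofReal (hnn x y)]
  have hofReal : ∀ x, ∑' y, ENNReal.ofReal (R x y * F y) = ENNReal.ofReal (h x) := fun x =>
    (ENNReal.ofReal_tsum_of_nonneg (hnn x) (hsummable x)).symm
  have hfin : ∀ s : Finset G, ∑ x ∈ s, h x ^ r ≤ K ^ r := by
    intro s
    set T := ∑ x ∈ s, h x ^ r with hT
    have hT0 : 0 ≤ T := Finset.sum_nonneg fun x _ => Real.rpow_nonneg (hh0 x) _
    rcases eq_or_lt_of_le hT0 with h0 | hTp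
    · rw [← h0]; positivity
    set g : G → ℝ := fun x => if x ∈ s then h x ^ (r - 1) / T ^ (1 / q) else 0 with hg
    have hg0 : ∀ x, 0 ≤ g x := fun x => by
      simp only [hg]; split_ifs
      · exact div_nonneg (Real.rpow_nonneg (hh0 x) _) (by positivity)
      · exact le_rfl
    have hgq : ∑' y, ENNReal.ofReal (g y ^ q) ≤ 1 := by
      rw [tsum_eq_sum (s := s) (fun y hy => by simp [hg, hy, Real.zero_rpow hq0.ne'])]
      rw [← ENNReal.ofReal_sum_of_nonneg (fun y _ => Real.rpow_nonneg (hg0 y) _),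
        ENNReal.ofReal_le_one]
      have : ∀ y ∈ s, g y ^ q = h y ^ r / T := by
        intro y hy
        simp only [hg, if_pos hy]
        rw [Real.div_rpow (Real.rpow_nonneg (hh0 y) _) (by positivity), ← Real.rpow_mul (hh0 y),
          ← Real.rpow_mul hT0, hqr, one_div_mul_cancel hq0.ne', Real.rpow_one]
      rw [Finset.sum_congr rfl this, ← Finset.sum_div, ← hT, div_self hTp.ne']
    have h1 := H F g hF0 hg0 hFq hgq
    have h2 : ∀ x, ∑' y, ENNReal.ofReal (g x * R x y * F y) = ENNReal.ofReal (g x * h x) := by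
      intro x
      rw [ENNReal.ofReal_mul (hg0 x), ← hofReal, ← ENNReal.tsum_mul_left]
      refine tsum_congr fun y => ?_
      rw [← ENNReal.ofReal_mul (hg0 x), mul_assoc]
    simp_rw [h2] at h1
    have h3 := (ENNReal.sum_le_tsum s).trans h1
    rw [← ENNReal.ofReal_sum_of_nonneg (fun y _ => mul_nonneg (hg0 y) (hh0 y)),
      ENNReal.ofReal_le_ofReal_iff hK.le] at h3
    have h4 : ∀ x ∈ s, g x * h x = h x ^ r / T ^ (1 / q) := by
      intro x hx
      simp only [hg, if_pos hx]
      rw [div_mul_eq_mul_div]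
      congr 1
      rcases eq_or_lt_of_le (hh0 x) with h0 | h0
      · rw [← h0, Real.zero_rpow hr0.ne', mul_zero]
      · rw [Real.rpow_sub h0, Real.rpow_one]; field_simp
    rw [Finset.sum_congr rfl h4, ← Finset.sum_div, ← hT] at h3
    have h5 : T / T ^ (1 / q) = T ^ (1 - 1 / q) := by
      rw [Real.rpow_sub hTp, Real.rpow_one]
    rw [h5] at h3
    have h6 := Real.rpow_le_rpow (by positivity) h3 hr0.le
    rw [← Real.rpow_mul hT0] at h6
    have : (1 - 1 / q) * r = 1 := by linarith
    rwa [this, Real.rpow_one] at h6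
  have htot : ∑' x, |conv R f x| ^ r ≤ (K * M) ^ r := by
    refine tsum_le_of_sum_le' (by positivity) fun s => ?_
    have : ∀ x ∈ s, |conv R f x| ^ r = M ^ r * h x ^ r := by
      intro x _
      rw [hconv, abs_of_nonneg (mul_nonneg hM.le (hh0 x)), Real.mul_rpow hM.le (hh0 x)]
    rw [Finset.sum_congr rfl this, ← Finset.mul_sum, Real.mul_rpow hK.le hM.le, mul_comm]
    gcongr
    exact hfin s
  unfold lpNorm
  calc _ ≤ ((K * M) ^ r) ^ (1 / r) :=
        Real.rpow_le_rpow (tsum_nonneg fun x => by positivity) htot (by positivity)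
    _ = K * M := by
        rw [← Real.rpow_mul (by positivity), mul_one_div_cancel hr0.ne', Real.rpow_one]

theorem sobolev_type_inequality_convolution
    [Group G] [Countable G]
    (S : Finset G) (hS_gen : Subgroup.closure (S : Set G) = ⊤)
    (hS_sym : ∀ s ∈ S, s⁻¹ ∈ S) (hS_e : (1 : G) ∉ S)
    (N : ℕ) (hN : 3 ≤ N)
    (C₁ C₂ : ℝ) (hC₁ : 0 < C₁) (hC₂ : 0 < C₂)
    (hgrowth : ∀ n : ℕ, 1 ≤ n →
      C₁ * (n : ℝ) ^ N ≤ (Nat.card {x : G // wordDist S 1 x ≤ n} : ℝ) ∧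
      (Nat.card {x : G // wordDist S 1 x ≤ n} : ℝ) ≤ C₂ * (n : ℝ) ^ N)
    (α : ℝ) (hα : 0 < α) (hαN : α < N)
    (Rα : G → G → ℝ) (hR_nonneg : ∀ x y, 0 ≤ Rα x y)
    (hR_symm : ∀ x y, Rα x y = Rα y x)
    (c₁ c₂ : ℝ) (hc₁ : 0 < c₁) (hc₂ : 0 < c₂)
    (hR_low : ∀ x y : G, x ≠ y → c₁ * (wordDist S x y : ℝ) ^ (α - (N : ℝ)) ≤ Rα x y)
    (hR_up : ∀ x y : G, x ≠ y → Rα x y ≤ c₂ * (wordDist S x y : ℝ) ^ (α - (N : ℝ)))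
    (hR_diag : ∀ x : G, Rα x x ≤ c₂)
    (p : ℝ) (hp : ((N : ℝ) + α) / ((N : ℝ) - 2) ≤ p) :
    ∃ C : ℝ, 0 < C ∧ ∀ u : G → ℝ, MemD12 S N u →
      lpNorm (2 * (N : ℝ) / ((N : ℝ) - α)) (conv Rα (fun y => |u y| ^ p)) ≤
        C * D12Norm S u ^ p := by
  classical
  have hN3 : (3 : ℝ) ≤ N := by exact_mod_cast hN
  have hN2 : (0 : ℝ) < (N : ℝ) - 2 := by linarith
  have hN0 : (0 : ℝ) < (N : ℝ) := by linarith
  -- balls as finsets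
  have hball : ∀ n : ℕ, ∃ B : Finset G, 1 ≤ n → (∀ h, h ∈ B ↔ wordDist S 1 h ≤ n) ∧
      C₁ * (n : ℝ) ^ N ≤ (B.card : ℝ) ∧ (B.card : ℝ) ≤ C₂ * (n : ℝ) ^ N := by
    intro n
    by_cases hn : 1 ≤ n
    swap
    · exact ⟨∅, fun h => absurd h hn⟩
    obtain ⟨h1, h2⟩ := hgrowth n hn
    have hn0 : (0 : ℝ) < n := by exact_mod_cast hn
    have hpos : 0 < Nat.card {x : G // wordDist S 1 x ≤ n} := by
      have : (0 : ℝ) < (Nat.card {x : G // wordDist S 1 x ≤ n} : ℝ) :=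
        lt_of_lt_of_le (by positivity) h1
      exact_mod_cast this
    have hfin : Finite {x : G // wordDist S 1 x ≤ n} := Nat.finite_of_card_ne_zero hpos.ne'
    have hfin' : Set.Finite {x : G | wordDist S 1 x ≤ n} := hfin
    have hc : hfin'.toFinset.card = Nat.card {x : G // wordDist S 1 x ≤ n} :=
      (Nat.card_eq_card_finite_toFinset hfin').symm
    refine ⟨hfin'.toFinset, fun _ => ⟨fun h => by simp, ?_, ?_⟩⟩
    · rw [hc]; exact h1
    · rw [hc]; exact h2
  choose B hBall using hball
  obtain ⟨K₁, hK₁, hSob⟩ := sobolev_est S N hN C₁ hC₁ B (by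
    intro n hn h hh
    obtain ⟨l, hl1, hl2, hl3⟩ := exists_word S hS_gen hS_sym 1 h
    refine ⟨l, hl1, ?_, by simpa using hl3⟩
    rw [hl2]
    exact ((hBall n hn).1 h).1 hh) (fun n hn => (hBall n hn).2.1)
  obtain ⟨K₂, hK₂, hHLS⟩ := hls_norm N hN α hα hαN (C₂ * 2 ^ N) c₂ (by positivity) hc₂
    (fun x y => Nat.log 2 (wordDist S x y)) Rα (by
      intro x j
      have h1 : 1 ≤ 2 ^ (j + 1) := Nat.one_le_two_pow
      refine ⟨(B (2 ^ (j + 1))).map (mulLeftEmbedding x), ?_, ?_⟩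
      · intro y hy
        rw [Finset.mem_map]
        refine ⟨x⁻¹ * y, ?_, by simp⟩
        rw [(hBall _ h1).1, ← wordDist_left]
        have := Nat.lt_pow_succ_log_self (b := 2) (by norm_num) (wordDist S x y)
        rw [hy] at this
        exact this.le
      · rw [Finset.card_map]
        refine (hBall _ h1).2.2.trans (le_of_eq ?_)
        push_cast
        rw [← pow_mul, mul_assoc, ← pow_mul, ← pow_add]
        congr 2
        ring) hR_nonneg hR_symm (by
      intro x y
      by_cases hxy : x = y
      · subst hxy
        have h0 : wordDist S x x = 0 :=
          Nat.sInf_eq_zero.2 (Or.inl ⟨[], by simp, by simp, by simp⟩)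
        rw [h0]
        simpa using hR_diag x
      · refine (hR_up x y hxy).trans ?_
        have hd := wordDist_pos S hS_gen hS_sym x y hxy
        have h1 := Nat.pow_log_le_self 2 hd.ne'
        have h2 : (2 : ℝ) ^ (Nat.log 2 (wordDist S x y)) ≤ (wordDist S x y : ℝ) := by
          exact_mod_cast h1
        refine mul_le_mul_of_nonneg_left ?_ hc₂.le
        calc (wordDist S x y : ℝ) ^ (α - (N : ℝ))
            ≤ ((2 : ℝ) ^ (Nat.log 2 (wordDist S x y))) ^ (α - (N : ℝ)) :=
              Real.rpow_le_rpow_of_nonpos (by positivity) h2 (by linarith)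
          _ = _ := by
              rw [← Real.rpow_natCast, ← Real.rpow_natCast, ← Real.rpow_mul (by norm_num),
                ← Real.rpow_mul (by norm_num), mul_comm])
  have hp0 : 0 < p := lt_of_lt_of_le (by positivity) hp
  refine ⟨K₂ * K₁ ^ p, by positivity, fun u hu => ?_⟩
  have hs := hSob u hu
  set Q := 2 * (N : ℝ) / ((N : ℝ) - 2) with hQ
  set q := 2 * (N : ℝ) / ((N : ℝ) + α) with hq
  have hQ0 : 0 < Q := by positivity
  have hq0 : 0 < q := by positivity
  have hpq : Q ≤ p * q := by
    calc Q = ((N : ℝ) + α) / ((N : ℝ) - 2) * q := by rw [hQ, hq]; field_simp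
      _ ≤ _ := by gcongr
  have hD0 : 0 ≤ D12Norm S u := Real.rpow_nonneg
    (tsum_nonneg fun x => Finset.sum_nonneg fun s _ => sq_nonneg _) _
  set M := K₁ * D12Norm S u with hM
  have hM0 : 0 ≤ M := by positivity
  have hsum : Summable fun x => |u x| ^ Q := hu.1
  have hpt : ∀ x, |u x| ≤ M := by
    intro x
    have h1 : |u x| ^ Q ≤ M ^ Q :=
      (hsum.le_tsum x (fun y _ => by positivity)).trans hs
    exact (Real.rpow_le_rpow_iff (abs_nonneg _) hM0 hQ0).1 h1
  rcases eq_or_lt_of_le hM0 with h0 | hMp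
  · have hu0 : ∀ x, |u x| = 0 := fun x => le_antisymm (h0 ▸ hpt x) (abs_nonneg _)
    have hr0 : 0 < 2 * (N : ℝ) / ((N : ℝ) - α) := by
      have : 0 < (N : ℝ) - α := by linarith
      positivity
    have hc0 : ∀ x, conv Rα (fun y => |u y| ^ p) x = 0 := fun x => by
      simp [conv, hu0, Real.zero_rpow hp0.ne']
    have : lpNorm (2 * (N : ℝ) / ((N : ℝ) - α)) (conv Rα (fun y => |u y| ^ p)) = 0 := by
      unfold lpNorm
      simp only [hc0, abs_zero, Real.zero_rpow hr0.ne', tsum_zero]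
      exact Real.zero_rpow (by positivity)
    rw [this]
    positivity
  have hfin := hHLS (fun y => |u y| ^ p) (fun y => by positivity) (M ^ p) (by positivity) (by
    have hle : ∀ y, (|u y| ^ p) ^ q ≤ M ^ (p * q - Q) * |u y| ^ Q := by
      intro y
      rw [← Real.rpow_mul (abs_nonneg _)]
      rcases eq_or_lt_of_le (abs_nonneg (u y)) with h0 | h0
      · rw [← h0, Real.zero_rpow (by positivity)]; positivity
      · have : |u y| ^ (p * q) = |u y| ^ (p * q - Q) * |u y| ^ Q := by
          rw [← Real.rpow_add h0]; congr 1; ring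
        rw [this]
        gcongr
        exact hpt y
    calc ∑' y, ENNReal.ofReal ((|u y| ^ p) ^ q)
        ≤ ∑' y, ENNReal.ofReal (M ^ (p * q - Q)) * ENNReal.ofReal (|u y| ^ Q) := by
          refine ENNReal.tsum_le_tsum fun y => ?_
          rw [← ENNReal.ofReal_mul (by positivity)]
          exact ENNReal.ofReal_le_ofReal (hle y)
      _ = ENNReal.ofReal (M ^ (p * q - Q)) * ENNReal.ofReal (∑' y, |u y| ^ Q) := by
          rw [ENNReal.tsum_mul_left, ENNReal.ofReal_tsum_of_nonneg (fun y => by positivity) hsum]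
      _ ≤ ENNReal.ofReal (M ^ (p * q - Q)) * ENNReal.ofReal (M ^ Q) := by gcongr
      _ = _ := by
          rw [← ENNReal.ofReal_mul (by positivity), ← Real.rpow_add hMp,
            ← Real.rpow_mul hM0]
          congr 2; ring)
  refine hfin.trans (le_of_eq ?_)
  rw [hM, Real.mul_rpow hK₁.le hD0]; ring

end Choquard
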